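/- arXiv:1009.1271 — 2 statements merged into one kernel-verified Lean document; each statement's English description precedes it below -/
import Mathlib

section
/- Let S be a Noetherian ℤ-graded ring and M a finitely generated graded S-module. Then for every i: (i) end(H^i_{S_+}(M)) ∈ ℤ ∪ {−∞}, i.e. H^i_{S_+}(M) vanishes in all sufficiently large degrees; and (ii) for every μ ∈ ℤ the graded piece H^i_{S_+}(M)_μ is a finitely generated S_0-module. -/
noncomputable section CechCore

variable (A : Type) [CommRing A] {n : ℕ} (x : Fin n → A)
  (M : Type) [AddCommGroup M] [Module A M]

/-- The localization of `M` at the powers of `∏ i ∈ S, x i`. -/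
abbrev cechL (S : Finset (Fin n)) : Type :=
  LocalizedModule (Submonoid.powers (∏ i ∈ S, x i)) M

/-- The `p`-th term of the (stable Koszul/Čech) complex of `M` with respect to `x`. -/
abbrev cechC (p : ℕ) : Type := ∀ S : {S : Finset (Fin n) // S.card = p}, cechL A x M S.1

/-- The localization map between Čech localizations, for `S ⊆ T`. -/
def cechMap (S T : Finset (Fin n)) (h : S ⊆ T) : cechL A x M S →ₗ[A] cechL A x M T :=
  LocalizedModule.lift _ (LocalizedModule.mkLinearMap (Submonoid.powers (∏ i ∈ T, x i)) M)
    (by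
      rintro ⟨s, k, rfl⟩
      simp only [map_pow]
      refine IsUnit.pow k ?_
      have hu : IsUnit ((algebraMap A (Module.End A (cechL A x M T))) (∏ i ∈ T, x i)) :=
        IsLocalizedModule.map_units (LocalizedModule.mkLinearMap _ M)
          ⟨∏ i ∈ T, x i, Submonoid.mem_powers _⟩
      have h2 : (∏ i ∈ T, x i) = (∏ i ∈ T \ S, x i) * ∏ i ∈ S, x i :=
        (Finset.prod_sdiff h).symm
      have hu' : IsUnit ((algebraMap A (Module.End A (cechL A x M T)))
          ((∏ i ∈ T \ S, x i) * ∏ i ∈ S, x i)) := by rw [← h2]; exact hu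
      rw [map_mul] at hu'
      exact (((Commute.all ((∏ i ∈ T \ S, x i)) (∏ i ∈ S, x i)).map
        (algebraMap A (Module.End A (cechL A x M T))).toMonoidHom).isUnit_mul_iff.mp hu').2)

/-- The Čech differential. -/
def cechD (p : ℕ) : cechC A x M p →ₗ[A] cechC A x M (p + 1) :=
  LinearMap.pi fun T =>
    ∑ j ∈ T.1.attach,
      ((-1 : A) ^ (T.1.filter (fun a => a < j.1)).card) •
        ((cechMap A x M (T.1.erase j.1) T.1 (Finset.erase_subset _ _)).comp
          (LinearMap.proj (⟨T.1.erase j.1, by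
            simp [Finset.card_erase_of_mem j.2, T.2]⟩ : {S : Finset (Fin n) // S.card = p})))

/-- `c` is a coboundary in the Čech complex. -/
def cechIsBoundary : (p : ℕ) → cechC A x M p → Prop
  | 0, c => c = 0
  | (q + 1), c => ∃ b : cechC A x M q, cechD A x M q b = c

/-- The degree-`μ` graded piece of a Čech localization, for a grading `ℳ` of `M`
over a grading of `A` in which `x i` has degree `w i`. -/
def cechGrade (ℳ : ℤ → AddSubgroup M) (w : Fin n → ℤ) (μ : ℤ) (S : Finset (Fin n)) :
    AddSubgroup (cechL A x M S) :=
  AddSubgroup.closure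
    {c | ∃ (m : M) (k : ℕ), m ∈ ℳ (μ + k * (∑ i ∈ S, w i)) ∧
      c = LocalizedModule.mk m ⟨(∏ i ∈ S, x i) ^ k, Submonoid.pow_mem _ (Submonoid.mem_powers _) k⟩}

/-- `H^i_{(x)}(M)_μ ≠ 0`: there is a homogeneous degree-`μ` cocycle in the Čech complex
which is not a coboundary.  This is the nonvanishing of the degree-`μ` part of the `i`-th
local cohomology of the graded module `M` supported on the ideal generated by `x`. -/
def lcGradeNonzero (ℳ : ℤ → AddSubgroup M) (w : Fin n → ℤ) (i : ℕ) (μ : ℤ) : Prop :=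
  ∃ c : cechC A x M i, (∀ T, c T ∈ cechGrade A x M ℳ w μ T.1) ∧
    cechD A x M i c = 0 ∧ ¬ cechIsBoundary A x M i c

/-- `H^i_{(x)}(M) = 0` : every Čech cocycle is a coboundary. -/
def lcVanish (i : ℕ) : Prop :=
  ∀ c : cechC A x M i, cechD A x M i c = 0 → cechIsBoundary A x M i c

/-- The map from the previous term of the Čech complex (declared as the zero map in
homological degree `0`). -/
def cechDprev : (i : ℕ) → (cechC A x M (i - 1) →ₗ[A] cechC A x M i)
  | 0 => 0
  | (q + 1) => cechD A x M q

/-- The `i`-th local cohomology module of `M` supported on the ideal generated by `x`,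
defined as cocycles modulo (cocycles ∩ boundaries) of the Čech complex. -/
def lcMod (i : ℕ) : Type :=
  ↥(LinearMap.ker (cechD A x M i)) ⧸
    (Submodule.comap (LinearMap.ker (cechD A x M i)).subtype
      (LinearMap.range (cechDprev A x M i)))

instance (i : ℕ) : AddCommGroup (lcMod A x M i) := by unfold lcMod; infer_instance
instance (i : ℕ) : Module A (lcMod A x M i) := by unfold lcMod; infer_instance

/-- The ideal of elements of positive degree of a graded ring. -/
def irrelevantIdeal (𝒜 : ℤ → AddSubgroup A) : Ideal A :=
  Ideal.span {a : A | ∃ μ > 0, a ∈ 𝒜 μ}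

end CechCore


namespace CechFin

/-! ### Abstract Noetherian subquotients -/
section Abstract
variable {R : Type} [CommRing R] {X : Type} [AddCommGroup X] [Module R X]

/-- The image of `Z` in `X / B` is Noetherian. -/
def NSub (Z B : Submodule R X) : Prop := IsNoetherian R (Z.map B.mkQ)

lemma NSub.of_le {Z B : Submodule R X} (h : Z ≤ B) : NSub Z B := by
  have h0 : Z.map B.mkQ = ⊥ := by
    rw [eq_bot_iff, Submodule.map_le_iff_le_comap]
    intro z hz
    simpa using h hz
  unfold NSub
  rw [h0]
  infer_instance

lemma NSub.ext {Z1 B1 Z2 B2 Z3 B3 : Submodule R X} (h g : X →ₗ[R] X)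
    (h1 : NSub Z1 B1) (h3 : NSub Z3 B3)
    (hB1 : ∀ b ∈ B1, h b ∈ B2) (hgB : ∀ b ∈ B2, g b ∈ B3) (hgZ : ∀ z ∈ Z2, g z ∈ Z3)
    (hex : ∀ z ∈ Z2, g z ∈ B3 → ∃ u ∈ Z1, z - h u ∈ B2) : NSub Z2 B2 := by
  unfold NSub at *
  let hb : (X ⧸ B1) →ₗ[R] (X ⧸ B2) := B1.mapQ B2 h hB1
  let gb : (X ⧸ B2) →ₗ[R] (X ⧸ B3) := B2.mapQ B3 g hgB
  let V2 := Z2.map B2.mkQ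
  let V1 := Z1.map B1.mkQ
  let V3 := Z3.map B3.mkQ
  have hV1 : IsNoetherian R (V1.map hb) := by
    have : IsNoetherian R V1 := h1
    exact isNoetherian_of_surjective _ (LinearMap.range_eq_top.2 (hb.submoduleMap_surjective V1))
  have hle : V2 ⊓ LinearMap.ker gb ≤ V1.map hb := by
    rintro _ ⟨⟨z, hz, rfl⟩, hk⟩
    have hk' : g z ∈ B3 := by
      have : gb (B2.mkQ z) = 0 := hk
      simpa [gb] using this
    obtain ⟨u, hu, huz⟩ := hex z hz hk'
    refine ⟨B1.mkQ u, ⟨u, hu, rfl⟩, ?_⟩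
    have : B2.mkQ (z - h u) = 0 := (Submodule.Quotient.mk_eq_zero B2).2 huz
    rw [map_sub, sub_eq_zero] at this
    rw [this]
    simp [hb]
  have hK : IsNoetherian R ↥(V2 ⊓ LinearMap.ker gb) := isNoetherian_of_le hle
  have hmap : ∀ v ∈ V2, gb v ∈ V3 := by
    rintro _ ⟨z, hz, rfl⟩
    exact ⟨g z, hgZ z hz, by simp [gb]⟩
  have : IsNoetherian R V3 := h3
  refine isNoetherian_of_range_eq_ker
    (Submodule.inclusion (inf_le_left : V2 ⊓ LinearMap.ker gb ≤ V2)) (gb.restrict hmap) ?_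
  ext ⟨v, hv⟩
  simp only [LinearMap.mem_range, LinearMap.mem_ker]
  constructor
  · rintro ⟨⟨y, hy1, hy2⟩, hy⟩
    have : y = v := congrArg Subtype.val hy
    subst this
    exact Subtype.ext hy2
  · intro hv0
    exact ⟨⟨v, hv, congrArg Subtype.val hv0⟩, rfl⟩

lemma van_ext {Z1 B1 Z2 B2 B3 : Submodule R X} (h g : X →ₗ[R] X)
    (h1 : Z1 ≤ B1)
    (hB1 : ∀ b ∈ B1, h b ∈ B2)
    (hex : ∀ z ∈ Z2, g z ∈ B3 → ∃ u ∈ Z1, z - h u ∈ B2) :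
    ∀ z ∈ Z2, g z ∈ B3 → z ∈ B2 := by
  intro z hz hg
  obtain ⟨u, hu, huz⟩ := hex z hz hg
  have := B2.add_mem huz (hB1 u (h1 hu))
  simpa using this

end Abstract

/-! ### Graded pieces -/
section Graded
variable {A : Type} [CommRing A] (𝒜 : ℤ → AddSubgroup A) [GradedRing 𝒜]
  {M : Type} [AddCommGroup M] [Module A M]
  (ℳ : ℤ → AddSubgroup M) [DirectSum.Decomposition ℳ] [SetLike.GradedSMul 𝒜 ℳ]

/-- The degree zero subring. -/
def R0 : Subring A where
  carrier := 𝒜 0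
  mul_mem' {a b} ha hb := by
    have := SetLike.GradedMul.mul_mem (A := 𝒜) ha hb
    simpa using this
  one_mem' := SetLike.GradedOne.one_mem
  add_mem' := (𝒜 0).add_mem
  zero_mem' := (𝒜 0).zero_mem
  neg_mem' := (𝒜 0).neg_mem

lemma smul_deg {i j k : ℤ} {a : A} {m : M} (ha : a ∈ 𝒜 i) (hm : m ∈ ℳ j) (h : k = i + j) :
    a • m ∈ ℳ k := by
  subst h
  exact SetLike.GradedSMul.smul_mem ha hm

/-- Projection to the degree `μ` component. -/
def pr (μ : ℤ) : M →+ M where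
  toFun m := (DirectSum.decompose ℳ m μ : M)
  map_zero' := by simp
  map_add' a b := by simp

lemma pr_mem (μ : ℤ) (m : M) : pr ℳ μ m ∈ ℳ μ := (DirectSum.decompose ℳ m μ).2

lemma pr_same {μ : ℤ} {m : M} (h : m ∈ ℳ μ) : pr ℳ μ m = m :=
  DirectSum.decompose_of_mem_same ℳ h

lemma pr_ne {μ ν : ℤ} {m : M} (h : m ∈ ℳ ν) (hne : ν ≠ μ) : pr ℳ μ m = 0 :=
  DirectSum.decompose_of_mem_ne ℳ h hne

lemma pr_smul {i : ℤ} {a : A} (ha : a ∈ 𝒜 i) (μ ν : ℤ) (h : μ = i + ν) (m : M) :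
    pr ℳ μ (a • m) = a • pr ℳ ν m := by
  induction m using DirectSum.Decomposition.inductionOn ℳ with
  | zero => simp
  | @homogeneous j m =>
    have hm : a • (m : M) ∈ ℳ (i + j) := smul_deg 𝒜 ℳ ha m.2 rfl
    by_cases hj : j = ν
    · subst hj; subst h
      rw [pr_same ℳ hm, pr_same ℳ m.2]
    · rw [pr_ne ℳ hm (by omega), pr_ne ℳ m.2 hj, smul_zero]
  | add m m' h1 h2 => simp [smul_add, h1, h2]

/-- `𝒜 0 • ℳ μ ⊆ ℳ μ`, as a submodule over the degree zero ring. -/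
def Mdeg (μ : ℤ) : Submodule (R0 𝒜) M where
  carrier := ℳ μ
  add_mem' := (ℳ μ).add_mem
  zero_mem' := (ℳ μ).zero_mem
  smul_mem' a m hm := smul_deg 𝒜 ℳ (i := 0) (j := μ) a.2 hm (by simp)

lemma pr_smul_zero (μ : ℤ) (N : Submodule (R0 𝒜) M) {m : M} (hm : m ∈ ℳ μ) (hN : m ∈ N) (a : A) :
    pr ℳ μ (a • m) ∈ N := by
  induction a using DirectSum.Decomposition.inductionOn 𝒜 with
  | zero => simp
  | @homogeneous j a =>
    by_cases hj : j = 0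
    · subst hj
      rw [pr_smul 𝒜 ℳ a.2 μ μ (by simp), pr_same ℳ hm]
      exact N.smul_mem (⟨a.1, a.2⟩ : R0 𝒜) hN
    · rw [pr_ne ℳ (smul_deg 𝒜 ℳ a.2 hm rfl) (by omega)]
      exact N.zero_mem
  | add m m' h1 h2 => rw [add_smul, map_add]; exact N.add_mem h1 h2

lemma Mdeg_noeth [IsNoetherian A M] (μ : ℤ) : IsNoetherian (R0 𝒜) (Mdeg 𝒜 ℳ μ) := by
  have key : ∀ N : Submodule (R0 𝒜) M, N ≤ Mdeg 𝒜 ℳ μ → ∀ m ∈ ℳ μ,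
      m ∈ Submodule.span A (N : Set M) → m ∈ N := by
    intro N hN m hm hs
    have : ∀ y ∈ Submodule.span A (N : Set M), ∀ a : A, pr ℳ μ (a • y) ∈ N := by
      intro y hy
      induction hy using Submodule.span_induction with
      | mem y hy => exact pr_smul_zero 𝒜 ℳ μ N (hN hy) hy
      | zero => simp
      | add y z _ _ h1 h2 => intro a; rw [smul_add, map_add]; exact N.add_mem (h1 a) (h2 a)
      | smul b y _ h => intro a; rw [smul_smul]; exact h _
    have h1 := this m hs 1
    rwa [one_smul, pr_same ℳ hm] at h1
  rw [isNoetherian_iff']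
  let f : Submodule (R0 𝒜) (Mdeg 𝒜 ℳ μ) → Submodule A M :=
    fun N => Submodule.span A ((N.map (Mdeg 𝒜 ℳ μ).subtype : Submodule (R0 𝒜) M) : Set M)
  have hf : StrictMono f := by
    apply Monotone.strictMono_of_injective
    · intro N N' h
      exact Submodule.span_mono (Submodule.map_mono h)
    · have hle : ∀ N N', f N = f N' → N ≤ N' := by
        intro N N' h y hy
        have h1 : (y : M) ∈ f N' := by
          rw [← h]; exact Submodule.subset_span ⟨y, hy, rfl⟩
        have h2 := key (N'.map (Mdeg 𝒜 ℳ μ).subtype) (Submodule.map_subtype_le _ _) y y.2 h1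
        obtain ⟨z, hz, hzy⟩ := h2
        have : z = y := Subtype.ext hzy
        rwa [← this]
      intro N N' h
      exact le_antisymm (hle _ _ h) (hle _ _ h.symm)
  exact hf.wellFoundedGT

/-- Homogeneous submodule. -/
def Hom (Q : Submodule A M) : Prop := ∀ μ m, m ∈ Q → pr ℳ μ m ∈ Q

lemma large_deg [IsNoetherian A M] (P Q : Submodule A M) (hQ : Hom ℳ Q)
    (hPQ : ∀ i > 0, ∀ a ∈ 𝒜 i, ∀ m ∈ Q, a • m ∈ P) :
    ∃ e : ℤ, ∀ μ > e, ∀ m ∈ Q, m ∈ ℳ μ → m ∈ P := by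
  classical
  obtain ⟨F, hF⟩ := (IsNoetherian.noetherian Q : Q.FG)
  obtain ⟨e, he⟩ : ∃ e : ℤ, ∀ f ∈ F, ∀ μ > e, pr ℳ μ f = 0 := by
    obtain ⟨e, he⟩ := (F.biUnion fun f => (DirectSum.decompose ℳ f).support).bddAbove
    refine ⟨e, fun f hf μ hμ => ?_⟩
    by_contra hne
    have : μ ∈ (F.biUnion fun f => (DirectSum.decompose ℳ f).support) := by
      rw [Finset.mem_biUnion]
      refine ⟨f, hf, ?_⟩
      rw [DFinsupp.mem_support_iff]
      intro h0
      apply hne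
      change ((DirectSum.decompose ℳ f μ : ℳ μ) : M) = 0
      rw [h0]; rfl
    have := he this
    omega
  refine ⟨e, ?_⟩
  have main : ∀ m ∈ Submodule.span A (F : Set M), ∀ μ > e, pr ℳ μ m ∈ P := by
    intro m hm
    induction hm using Submodule.span_induction with
    | mem f hf => intro μ hμ; rw [he f hf μ hμ]; exact P.zero_mem
    | zero => simp
    | add y z _ _ h1 h2 => intro μ hμ; rw [map_add]; exact P.add_mem (h1 μ hμ) (h2 μ hμ)
    | smul b y hy h =>
      intro μ hμ
      rw [hF] at hy
      induction b using DirectSum.Decomposition.inductionOn 𝒜 with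
      | zero => simp
      | @homogeneous j b =>
        rw [pr_smul 𝒜 ℳ b.2 μ (μ - j) (by omega)]
        by_cases hj : 0 < j
        · exact hPQ j hj b b.2 _ (hQ _ _ hy)
        · exact P.smul_mem _ (h _ (by omega))
      | add a a' h1 h2 => rw [add_smul, map_add]; exact P.add_mem h1 h2
  intro μ hμ m hmQ hm
  rw [← pr_same ℳ hm]
  exact main m (by rw [hF]; exact hmQ) μ hμ

end Graded

/-! ### The total Čech complex -/
section Cech
variable {A : Type} [CommRing A] {n : ℕ} (x : Fin n → A)
  (M : Type) [AddCommGroup M] [Module A M]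

/-- The product `∏ i ∈ T, x i`. -/
abbrev xp (T : Finset (Fin n)) : A := ∏ i ∈ T, x i

/-- The fraction `m / x_T ^ k`. -/
def frac {M : Type} [AddCommGroup M] [Module A M] (T : Finset (Fin n)) (m : M) (k : ℕ) :
    cechL A x M T :=
  LocalizedModule.mk m
    ⟨(∏ i ∈ T, x i) ^ k, Submonoid.pow_mem _ (Submonoid.mem_powers _) k⟩

variable {M}

lemma frac_eq_iff (T : Finset (Fin n)) (m m' : M) (k k' : ℕ) :
    frac x T m k = frac x T m' k' ↔
      ∃ c : ℕ, (xp x T) ^ c • (xp x T) ^ k' • m = (xp x T) ^ c • (xp x T) ^ k • m' := by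
  unfold frac
  rw [LocalizedModule.mk_eq]
  constructor
  · rintro ⟨⟨_, c, rfl⟩, h⟩
    exact ⟨c, h⟩
  · rintro ⟨c, h⟩
    exact ⟨⟨_, c, rfl⟩, h⟩

lemma frac_up (T : Finset (Fin n)) (m : M) (k l : ℕ) :
    frac x T ((xp x T) ^ l • m) (k + l) = frac x T m k := by
  rw [frac_eq_iff]
  exact ⟨0, by simp [smul_smul, pow_add]⟩

lemma frac_smul (T : Finset (Fin n)) (a : A) (m : M) (k : ℕ) :
    a • frac x T m k = frac x T (a • m) k := by
  unfold frac
  rw [LocalizedModule.smul'_mk]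

lemma frac_add_same (T : Finset (Fin n)) (m m' : M) (k : ℕ) :
    frac x T m k + frac x T m' k = frac x T (m + m') k := by
  unfold frac
  rw [LocalizedModule.mk_add_mk, ← smul_add, LocalizedModule.mk_cancel_common_left]

lemma frac_zero (T : Finset (Fin n)) (k : ℕ) : frac x T (0 : M) k = 0 := by
  unfold frac
  rw [LocalizedModule.zero_mk]

lemma frac_neg (T : Finset (Fin n)) (m : M) (k : ℕ) : - frac x T m k = frac x T (-m) k := by
  rw [← neg_one_smul A, frac_smul, neg_one_smul]

lemma exists_frac (T : Finset (Fin n)) (c : cechL A x M T) : ∃ m k, c = frac x T m k := by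
  induction c using LocalizedModule.induction_on with
  | h m s =>
    obtain ⟨_, k, rfl⟩ := s
    exact ⟨m, k, rfl⟩

lemma frac_self (T : Finset (Fin n)) (m : M) (k : ℕ) :
    (xp x T) ^ k • frac x T m k = frac x T m 0 := by
  rw [frac_smul]
  have := frac_up x T m 0 k
  rwa [zero_add] at this

lemma cechMap_frac_zero (S T : Finset (Fin n)) (h : S ⊆ T) (m : M) :
    cechMap A x M S T h (frac x S m 0) = frac x T m 0 := by
  have e1 : frac x S m 0 = LocalizedModule.mkLinearMap (Submonoid.powers (∏ i ∈ S, x i)) M m := by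
    unfold frac
    rw [LocalizedModule.mkLinearMap_apply]
    congr 1
    exact Subtype.ext (pow_zero _)
  have e2 : frac x T m 0 = LocalizedModule.mkLinearMap (Submonoid.powers (∏ i ∈ T, x i)) M m := by
    unfold frac
    rw [LocalizedModule.mkLinearMap_apply]
    congr 1
    exact Subtype.ext (pow_zero _)
  rw [e1, e2]
  unfold cechMap
  rw [← LinearMap.comp_apply, LocalizedModule.lift_comp]

lemma smul_inj (S T : Finset (Fin n)) (h : S ⊆ T) (k : ℕ) (c c' : cechL A x M T)
    (hc : (xp x S) ^ k • c = (xp x S) ^ k • c') : c = c' := by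
  have h1 : (xp x T) ^ k • c = (xp x T) ^ k • c' := by
    have h2 : xp x T = xp x (T \ S) * xp x S := (Finset.prod_sdiff h).symm
    rw [h2, mul_pow, mul_smul, mul_smul, hc]
  obtain ⟨m, a, rfl⟩ := exists_frac x T c
  obtain ⟨m', a', rfl⟩ := exists_frac x T c'
  rw [frac_smul, frac_smul, frac_eq_iff] at h1
  obtain ⟨l, hl⟩ := h1
  rw [frac_eq_iff]
  refine ⟨l + k, ?_⟩
  simp only [smul_smul] at hl ⊢
  convert hl using 2 <;> ring

lemma cechMap_frac (S T : Finset (Fin n)) (h : S ⊆ T) (m : M) (k : ℕ) :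
    cechMap A x M S T h (frac x S m k) = frac x T ((xp x (T \ S)) ^ k • m) k := by
  apply smul_inj x S T h k
  rw [← map_smul, frac_self, cechMap_frac_zero, frac_smul, smul_smul, ← mul_pow,
    mul_comm, show xp x (T \ S) * xp x S = xp x T from Finset.prod_sdiff h]
  rw [← frac_smul, frac_self]

lemma cechMap_trans (S T U : Finset (Fin n)) (h : S ⊆ T) (h' : T ⊆ U) (c : cechL A x M S) :
    cechMap A x M T U h' (cechMap A x M S T h c) = cechMap A x M S U (h.trans h') c := by
  obtain ⟨m, k, rfl⟩ := exists_frac x S c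
  apply smul_inj x S U (h.trans h') k
  rw [← map_smul, ← map_smul, ← map_smul, frac_self, cechMap_frac_zero, cechMap_frac_zero,
    cechMap_frac_zero]

variable (M)
/-- The total Čech object: cochains on all finite subsets. -/
def Tot : Type := ∀ S : Finset (Fin n), cechL A x M S

instance : AddCommGroup (Tot x M) := by unfold Tot; infer_instance
instance : Module A (Tot x M) := by unfold Tot; infer_instance

variable {M}
/-- Evaluation of a total cochain. -/
def ev (S : Finset (Fin n)) : Tot x M →ₗ[A] cechL A x M S where
  toFun c := c S
  map_add' _ _ := rfl
  map_smul' _ _ := rfl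

/-- Build a total cochain. -/
def ofFun (f : ∀ S : Finset (Fin n), cechL A x M S) : Tot x M := f

lemma ev_ofFun (f : ∀ S : Finset (Fin n), cechL A x M S) (S) : ev x S (ofFun x f) = f S := rfl

lemma tot_ext {c d : Tot x M} (h : ∀ S, ev x S c = ev x S d) : c = d := funext h
variable (M)

/-- Čech sign. -/
def sg (A : Type) [CommRing A] {n : ℕ} (T : Finset (Fin n)) (j : Fin n) : A :=
  (-1 : A) ^ (T.filter (fun a => a < j)).card

/-- Total differential. -/
noncomputable def D : Tot x M →ₗ[A] Tot x M where
  toFun c := ofFun x fun T => ∑ j ∈ T,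
    sg A T j • cechMap A x M (T.erase j) T (Finset.erase_subset _ _) (ev x (T.erase j) c)
  map_add' c d := by
    apply tot_ext
    intro T
    rw [map_add]
    simp only [ev_ofFun]
    rw [← Finset.sum_add_distrib]
    refine Finset.sum_congr rfl fun j _ => ?_
    rw [map_add, map_add, smul_add]
  map_smul' a c := by
    apply tot_ext
    intro T
    rw [RingHom.id_apply, map_smul]
    simp only [ev_ofFun]
    rw [Finset.smul_sum]
    refine Finset.sum_congr rfl fun j _ => ?_
    rw [map_smul, map_smul, smul_comm]

variable {M}
lemma D_apply (c : Tot x M) (T : Finset (Fin n)) : ev x T (D x M c) = ∑ j ∈ T,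
    sg A T j • cechMap A x M (T.erase j) T (Finset.erase_subset _ _) (ev x (T.erase j) c) := rfl

lemma sg_sq (T : Finset (Fin n)) (j : Fin n) : sg A T j * sg A T j = 1 := by
  unfold sg
  rw [← mul_pow]; simp

lemma sg_swap_lt (T : Finset (Fin n)) (i j : Fin n) (hi : i ∈ T) (hij : i < j) :
    sg A T i * sg A (T.erase i) j = - (sg A T j * sg A (T.erase j) i) := by
  unfold sg
  have h1 : ((T.erase j).filter (fun a => a < i)) = T.filter (fun a => a < i) := by
    ext a; simp only [Finset.mem_filter, Finset.mem_erase]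
    constructor
    · rintro ⟨⟨_, h⟩, h'⟩; exact ⟨h, h'⟩
    · rintro ⟨h, h'⟩; exact ⟨⟨(h'.trans hij).ne, h⟩, h'⟩
  have h2 : (T.filter (fun a => a < j)).card = ((T.erase i).filter (fun a => a < j)).card + 1 := by
    rw [Finset.filter_erase, Finset.card_erase_add_one]
    simp [hi, hij]
  rw [h1, h2, pow_succ]
  ring

lemma sg_swap (T : Finset (Fin n)) (i j : Fin n) (hi : i ∈ T) (hj : j ∈ T) (hij : i ≠ j) :
    sg A T i * sg A (T.erase i) j = - (sg A T j * sg A (T.erase j) i) := by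
  rcases lt_or_gt_of_ne hij with h | h
  · exact sg_swap_lt T i j hi h
  · rw [sg_swap_lt T j i hj h, neg_neg]

lemma res_eq (c : Tot x M) {S S' T : Finset (Fin n)} (e : S = S') (h : S ⊆ T) (h' : S' ⊆ T) :
    cechMap A x M S T h (ev x S c) = cechMap A x M S' T h' (ev x S' c) := by
  subst e; rfl

lemma D_D (c : Tot x M) : D x M (D x M c) = 0 := by
  apply tot_ext
  intro T
  rw [D_apply, map_zero]
  have e : ∀ j ∈ T, sg A T j • cechMap A x M (T.erase j) T (Finset.erase_subset _ _)
      (ev x (T.erase j) (D x M c)) = ∑ i ∈ T.erase j, (sg A T j * sg A (T.erase j) i) •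
        cechMap A x M ((T.erase j).erase i) T
          ((Finset.erase_subset _ _).trans (Finset.erase_subset _ _)) 
          (ev x ((T.erase j).erase i) c) := by
    intro j _
    rw [D_apply, map_sum, Finset.smul_sum]
    refine Finset.sum_congr rfl fun i _ => ?_
    rw [map_smul, cechMap_trans, smul_smul]
  rw [Finset.sum_congr rfl e, Finset.sum_sigma']
  refine Finset.sum_involution (fun p _ => ⟨p.2, p.1⟩) ?_ ?_ ?_ ?_
  · rintro ⟨j, i⟩ h
    simp only [Finset.mem_sigma, Finset.mem_erase] at h
    obtain ⟨hj, hij, hi⟩ := h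
    simp only
    rw [sg_swap T j i hj hi (Ne.symm hij), neg_smul,
      res_eq x c (Finset.erase_right_comm) _
        ((Finset.erase_subset _ _).trans (Finset.erase_subset _ _)), neg_add_cancel]
  · rintro ⟨j, i⟩ h _ heq
    simp only [Finset.mem_sigma, Finset.mem_erase] at h
    simp only [Sigma.mk.injEq] at heq
    exact h.2.1 heq.1
  · rintro ⟨j, i⟩ h
    simp only [Finset.mem_sigma, Finset.mem_erase] at h ⊢
    exact ⟨h.2.2, Ne.symm h.2.1, h.1⟩
  · rintro ⟨j, i⟩ h
    rfl

end Cech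

/-! ### Graded pieces of the total Čech complex of a homogeneous submodule -/
section GradedCech
variable {A : Type} [CommRing A] {𝒜 : ℤ → AddSubgroup A} [GradedRing 𝒜]
  {n : ℕ} {x : Fin n → A} {w : Fin n → ℤ} (hx : ∀ i, x i ∈ 𝒜 (w i))
  {M : Type} [AddCommGroup M] [Module A M]
  (ℳ : ℤ → AddSubgroup M) [DirectSum.Decomposition ℳ] [SetLike.GradedSMul 𝒜 ℳ]

/-- The weight of `x_T`. -/
abbrev wt (w : Fin n → ℤ) (T : Finset (Fin n)) : ℤ := ∑ i ∈ T, w i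

include hx in
lemma xp_mem (T : Finset (Fin n)) (k : ℕ) : (xp x T) ^ k ∈ 𝒜 (k * wt w T) := by
  have h1 : xp x T ∈ 𝒜 (wt w T) := SetLike.prod_mem_graded 𝒜 w x (fun i _ => hx i)
  have := SetLike.pow_mem_graded k h1
  simpa using this

variable (x w) in
/-- `c` is a fraction of degree `μ` with numerator in `Q`. -/
def GP (Q : Submodule A M) (μ : ℤ) (T : Finset (Fin n)) (c : cechL A x M T) : Prop :=
  ∃ (m : M) (k : ℕ), m ∈ Q ∧ m ∈ ℳ (μ + k * wt w T) ∧ c = frac x T m k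

variable {ℳ}

include hx in
lemma GP.lift {Q : Submodule A M} {μ : ℤ} {T : Finset (Fin n)} {c : cechL A x M T}
    (h : GP x w ℳ Q μ T c) : ∃ k0 : ℕ, ∀ k ≥ k0, ∃ m ∈ Q, m ∈ ℳ (μ + k * wt w T) ∧
      c = frac x T m k := by
  obtain ⟨m, k0, hQ, hm, rfl⟩ := h
  refine ⟨k0, fun k hk => ?_⟩
  obtain ⟨l, rfl⟩ := Nat.exists_eq_add_of_le hk
  refine ⟨(xp x T) ^ l • m, Q.smul_mem _ hQ, ?_, (frac_up x T m k0 l).symm⟩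
  refine smul_deg 𝒜 ℳ (xp_mem hx T l) hm ?_
  push_cast; ring

lemma GP.mono {P Q : Submodule A M} (hPQ : P ≤ Q) {μ : ℤ} {T : Finset (Fin n)} {c : cechL A x M T}
    (h : GP x w ℳ P μ T c) : GP x w ℳ Q μ T c := by
  obtain ⟨m, k, hQ, hm, rfl⟩ := h
  exact ⟨m, k, hPQ hQ, hm, rfl⟩

lemma GP.zero (Q : Submodule A M) (μ : ℤ) (T : Finset (Fin n)) : GP x w ℳ Q μ T 0 :=
  ⟨0, 0, Q.zero_mem, (ℳ _).zero_mem, (frac_zero x T 0).symm⟩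

include hx in
lemma GP.add {Q : Submodule A M} {μ : ℤ} {T : Finset (Fin n)} {c d : cechL A x M T}
    (hc : GP x w ℳ Q μ T c) (hd : GP x w ℳ Q μ T d) : GP x w ℳ Q μ T (c + d) := by
  obtain ⟨k, hk⟩ := hc.lift hx
  obtain ⟨l, hl⟩ := hd.lift hx
  obtain ⟨m, hm, hm', rfl⟩ := hk (max k l) (le_max_left _ _)
  obtain ⟨m2, hm2, hm2', rfl⟩ := hl (max k l) (le_max_right _ _)
  exact ⟨m + m2, max k l, Q.add_mem hm hm2, (ℳ _).add_mem hm' hm2', frac_add_same _ _ _ _ _⟩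

include 𝒜 in
lemma GP.smul {Q : Submodule A M} {μ μ' i : ℤ} {T : Finset (Fin n)} {c : cechL A x M T}
    (hc : GP x w ℳ Q μ T c) {a : A} (ha : a ∈ 𝒜 i) (h : μ' = i + μ) :
    GP x w ℳ Q μ' T (a • c) := by
  obtain ⟨m, k, hm, hm', rfl⟩ := hc
  refine ⟨a • m, k, Q.smul_mem _ hm, smul_deg 𝒜 ℳ ha hm' ?_, frac_smul x T a m k⟩
  subst h; ring

lemma GP.neg {Q : Submodule A M} {μ : ℤ} {T : Finset (Fin n)} {c : cechL A x M T}
    (hc : GP x w ℳ Q μ T c) : GP x w ℳ Q μ T (-c) := by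
  obtain ⟨m, k, hm, hm', rfl⟩ := hc
  exact ⟨-m, k, Q.neg_mem hm, (ℳ _).neg_mem hm', frac_neg x T m k⟩

include hx in
lemma GP.res {Q : Submodule A M} {μ : ℤ} {S T : Finset (Fin n)} (h : S ⊆ T) {c : cechL A x M S}
    (hc : GP x w ℳ Q μ S c) : GP x w ℳ Q μ T (cechMap A x M S T h c) := by
  obtain ⟨m, k, hm, hm', rfl⟩ := hc
  refine ⟨(xp x (T \ S)) ^ k • m, k, Q.smul_mem _ hm,
    smul_deg 𝒜 ℳ (xp_mem hx _ k) hm' ?_, cechMap_frac x S T h m k⟩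
  have : wt w T = wt w (T \ S) + wt w S := (Finset.sum_sdiff h).symm
  rw [this]; ring

include hx in
lemma GP.sum {Q : Submodule A M} {μ : ℤ} {T : Finset (Fin n)} {ι : Type} (s : Finset ι)
    (f : ι → cechL A x M T) (hf : ∀ i ∈ s, GP x w ℳ Q μ T (f i)) :
    GP x w ℳ Q μ T (∑ i ∈ s, f i) := by
  classical
  induction s using Finset.induction_on with
  | empty => simpa using GP.zero Q μ T
  | insert a s ha ih =>
    rw [Finset.sum_insert ha]
    exact (hf a (by simp)).add hx (ih fun i hi => hf i (by simp [hi]))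

lemma GP.sg_smul {Q : Submodule A M} {μ : ℤ} {T : Finset (Fin n)} {c : cechL A x M T}
    (hc : GP x w ℳ Q μ T c) (S : Finset (Fin n)) (j : Fin n) :
    GP x w ℳ Q μ T (sg A S j • c) := by
  unfold sg
  rcases neg_one_pow_eq_or A (S.filter (fun a => a < j)).card with h | h
  · rw [h, one_smul]; exact hc
  · rw [h, neg_one_smul]; exact hc.neg

variable (ℳ)
/-- Degree `μ` total cochains with values in `Q`. -/
def CQ (Q : Submodule A M) (μ : ℤ) : Submodule (R0 𝒜) (Tot x M) where
  carrier := {c | ∀ T, GP x w ℳ Q μ T (ev x T c)}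
  add_mem' {c d} hc hd T := by
    rw [map_add]; exact (hc T).add hx (hd T)
  zero_mem' T := by
    rw [map_zero]; exact GP.zero Q μ T
  smul_mem' r c hc T := by
    rw [Subring.smul_def, map_smul]
    exact (hc T).smul (𝒜 := 𝒜) r.2 (by simp)

variable {ℳ}
lemma mem_CQ {Q : Submodule A M} {μ : ℤ} {c : Tot x M} :
    c ∈ CQ hx ℳ Q μ ↔ ∀ T, GP x w ℳ Q μ T (ev x T c) := Iff.rfl

lemma CQ_mono {P Q : Submodule A M} (hPQ : P ≤ Q) (μ : ℤ) : CQ hx ℳ P μ ≤ CQ hx ℳ Q μ :=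
  fun _ hc T => (hc T).mono hPQ

lemma D_mem {Q : Submodule A M} {μ : ℤ} {c : Tot x M} (hc : c ∈ CQ hx ℳ Q μ) :
    D x M c ∈ CQ hx ℳ Q μ := by
  intro T
  rw [D_apply]
  exact GP.sum hx _ _ fun j _ => ((hc _).res hx _).sg_smul _ _

lemma smul_mem {Q : Submodule A M} {μ μ' i : ℤ} {c : Tot x M} (hc : c ∈ CQ hx ℳ Q μ)
    {a : A} (ha : a ∈ 𝒜 i) (h : μ' = i + μ) : a • c ∈ CQ hx ℳ Q μ' := by
  intro T
  rw [map_smul]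
  exact (hc T).smul ha h

variable (ℳ)
/-- Relative cocycles. -/
noncomputable def ZQ (Q P : Submodule A M) (μ : ℤ) : Submodule (R0 𝒜) (Tot x M) :=
  CQ hx ℳ Q μ ⊓ (CQ hx ℳ P μ).comap ((D x M).restrictScalars (R0 𝒜))

/-- Relative coboundaries. -/
noncomputable def BQ (Q P : Submodule A M) (μ : ℤ) : Submodule (R0 𝒜) (Tot x M) :=
  CQ hx ℳ P μ ⊔ (CQ hx ℳ Q μ).map ((D x M).restrictScalars (R0 𝒜))
variable {ℳ}

lemma mem_ZQ {Q P : Submodule A M} {μ : ℤ} {c : Tot x M} :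
    c ∈ ZQ hx ℳ Q P μ ↔ c ∈ CQ hx ℳ Q μ ∧ D x M c ∈ CQ hx ℳ P μ := Iff.rfl

lemma mem_BQ {Q P : Submodule A M} {μ : ℤ} {c : Tot x M} :
    c ∈ BQ hx ℳ Q P μ ↔ ∃ p ∈ CQ hx ℳ P μ, ∃ b ∈ CQ hx ℳ Q μ, p + D x M b = c := by
  unfold BQ
  rw [Submodule.mem_sup]
  constructor
  · rintro ⟨p, hp, _, ⟨b, hb, rfl⟩, h⟩
    exact ⟨p, hp, b, hb, h⟩
  · rintro ⟨p, hp, b, hb, h⟩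
    exact ⟨p, hp, _, ⟨b, hb, rfl⟩, h⟩

lemma ZQ_smul {Q P : Submodule A M} {μ μ' i : ℤ} {c : Tot x M} (hc : c ∈ ZQ hx ℳ Q P μ)
    {a : A} (ha : a ∈ 𝒜 i) (h : μ' = i + μ) : a • c ∈ ZQ hx ℳ Q P μ' := by
  rw [mem_ZQ] at *
  rw [map_smul]
  exact ⟨smul_mem hx hc.1 ha h, smul_mem hx hc.2 ha h⟩

/-! #### Torsion -/

include hx in
lemma mem_hom_smul (j : Fin n) (l : ℕ) : x j ^ l ∈ 𝒜 (l * w j) := by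
  have := SetLike.pow_mem_graded l (hx j)
  simpa using this

include hx in
lemma GP.torsion {P Q : Submodule A M} {μ : ℤ} {j : Fin n} {T T' : Finset (Fin n)}
    (hj : j ∉ T) (hT : T' = insert j T) (h : T ⊆ T') {c : cechL A x M T}
    (hc : GP x w ℳ Q μ T c) (hr : GP x w ℳ P μ T' (cechMap A x M T T' h c)) :
    ∃ l0 : ℕ, ∀ l ≥ l0, GP x w ℳ P (l * w j + μ) T (x j ^ l • c) := by
  suffices hs : ∃ l0 : ℕ, GP x w ℳ P (l0 * w j + μ) T (x j ^ l0 • c) by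
    obtain ⟨l0, hl0⟩ := hs
    refine ⟨l0, fun l hl => ?_⟩
    obtain ⟨l', rfl⟩ := Nat.exists_eq_add_of_le hl
    rw [add_comm l0 l', pow_add, mul_smul]
    refine hl0.smul (mem_hom_smul hx j l') ?_
    push_cast; ring
  obtain ⟨m, k, hm, hm', rfl⟩ := hc
  obtain ⟨p, r, hp, hp', hr⟩ := hr
  rw [cechMap_frac, frac_eq_iff] at hr
  obtain ⟨c, hc⟩ := hr
  have hxT : xp x T' = x j * xp x T := by
    rw [hT]; exact Finset.prod_insert hj
  have hsd : xp x (T' \ T) = x j := by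
    subst hT
    have : insert j T \ T = {j} := by
      ext a; simp only [Finset.mem_sdiff, Finset.mem_insert, Finset.mem_singleton]
      constructor
      · rintro ⟨h | h, h'⟩
        · exact h
        · exact absurd h h'
      · rintro rfl; exact ⟨Or.inl rfl, hj⟩
    simp [xp, this]
  rw [hxT, hsd] at hc
  refine ⟨c + r + k, x j ^ (c + r + k) • (xp x T) ^ (c + r) • m, k + (c + r), ?_, ?_, ?_⟩
  · have : x j ^ (c + r + k) • (xp x T) ^ (c + r) • m
        = (x j * xp x T) ^ c • (x j * xp x T) ^ k • p := by
      rw [← hc]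
      simp only [smul_smul]
      congr 1
      ring
    rw [this]
    exact P.smul_mem _ (P.smul_mem _ hp)
  · refine smul_deg 𝒜 ℳ (mem_hom_smul hx j _)
      (smul_deg 𝒜 ℳ (xp_mem hx T (c + r)) hm' rfl) ?_
    push_cast; ring
  · rw [frac_smul, ← frac_up x T _ k (c + r), smul_comm]

include hx in
lemma GP.liftRes {Q : Submodule A M} {μ : ℤ} {j : Fin n} {T T' : Finset (Fin n)}
    (hj : j ∉ T) (hT : T' = insert j T) (h : T ⊆ T') {c : cechL A x M T'}
    (hc : GP x w ℳ Q μ T' c) :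
    ∃ k0 : ℕ, ∀ k ≥ k0, ∃ u, GP x w ℳ Q (k * w j + μ) T u ∧
      cechMap A x M T T' h u = x j ^ k • c := by
  obtain ⟨k0, hk0⟩ := hc.lift hx
  refine ⟨k0, fun k hk => ?_⟩
  obtain ⟨m, hm, hm', rfl⟩ := hk0 k hk
  have hwT : wt w T' = w j + wt w T := by
    rw [hT]; exact Finset.sum_insert hj
  have hsd : xp x (T' \ T) = x j := by
    subst hT
    have : insert j T \ T = {j} := by
      ext a; simp only [Finset.mem_sdiff, Finset.mem_insert, Finset.mem_singleton]
      constructor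
      · rintro ⟨h | h, h'⟩
        · exact h
        · exact absurd h h'
      · rintro rfl; exact ⟨Or.inl rfl, hj⟩
    simp [xp, this]
  refine ⟨frac x T m k, ⟨m, k, hm, ?_, rfl⟩, ?_⟩
  · rw [hwT] at hm'
    convert hm' using 2; ring
  · rw [cechMap_frac, hsd, frac_smul]

lemma exists_uniform {ι : Type} [Fintype ι] (p : ι → ℕ → Prop)
    (h : ∀ i, ∃ k0, ∀ k ≥ k0, p i k) : ∃ k, ∀ i, p i k := by
  choose f hf using h
  exact ⟨Finset.univ.sup f, fun i => hf i _ (Finset.le_sup (Finset.mem_univ i))⟩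

lemma torsion {P Q : Submodule A M} {μ : ℤ} (j : Fin n) {z : Tot x M}
    (hz : z ∈ ZQ hx ℳ Q P μ) : ∃ l : ℕ, x j ^ l • z ∈ BQ hx ℳ Q P (l * w j + μ) := by
  classical
  obtain ⟨k, hk⟩ : ∃ k : ℕ, ∀ S : Finset (Fin n), j ∉ S → ∃ u, GP x w ℳ Q (k * w j + μ) S u ∧
      cechMap A x M S (insert j S) (Finset.subset_insert _ _) u
        = x j ^ k • ev x (insert j S) z := by
    apply exists_uniform
    intro S
    by_cases hj : j ∈ S
    · exact ⟨0, fun k _ h => absurd hj h⟩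
    · obtain ⟨k0, h0⟩ := (hz.1 (insert j S)).liftRes hx hj rfl (Finset.subset_insert _ _)
      exact ⟨k0, fun k hk _ => h0 k hk⟩
  choose u hu1 hu2 using hk
  let b : Tot x M := ofFun x fun S => if h : j ∈ S then 0 else sg A S j • u S h
  have hb0 : ∀ S, j ∈ S → ev x S b = 0 := fun S h => by
    simp only [b, ev_ofFun]; rw [dif_pos h]
  have hb1 : ∀ S (h : j ∉ S), ev x S b = sg A S j • u S h := fun S h => by
    simp only [b, ev_ofFun]; rw [dif_neg h]
  have hbC : b ∈ CQ hx ℳ Q (k * w j + μ) := by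
    intro S
    by_cases h : j ∈ S
    · rw [hb0 S h]; exact GP.zero _ _ _
    · rw [hb1 S h]; exact (hu1 S h).sg_smul _ _
  let y : Tot x M := x j ^ k • z - D x M b
  have hyC : y ∈ CQ hx ℳ Q (k * w j + μ) :=
    Submodule.sub_mem _ (smul_mem hx hz.1 (mem_hom_smul hx j k) rfl) (D_mem hx hbC)
  have hDy : D x M y ∈ CQ hx ℳ P (k * w j + μ) := by
    simp only [y]
    rw [map_sub, D_D, sub_zero, map_smul]
    exact smul_mem hx hz.2 (mem_hom_smul hx j k) rfl
  have hsgE : ∀ T : Finset (Fin n), sg A (T.erase j) j = sg A T j := by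
    intro T
    unfold sg
    congr 2
    ext a; simp only [Finset.mem_filter, Finset.mem_erase]
    constructor
    · rintro ⟨⟨_, h⟩, h'⟩; exact ⟨h, h'⟩
    · rintro ⟨h, h'⟩; exact ⟨⟨h'.ne, h⟩, h'⟩
  have hD1 : ∀ (c : Tot x M) (_ : ∀ S, j ∈ S → ev x S c = 0) (T : Finset (Fin n)) (_ : j ∈ T),
      ev x T (D x M c) =
        sg A T j • cechMap A x M (T.erase j) T (Finset.erase_subset _ _) (ev x (T.erase j) c) := by
    intro c hc T hj
    rw [D_apply]
    refine Finset.sum_eq_single_of_mem j hj fun i _ hij => ?_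
    rw [hc (T.erase i) (Finset.mem_erase.2 ⟨Ne.symm hij, hj⟩), map_zero, smul_zero]
  have hy0 : ∀ T, j ∈ T → ev x T y = 0 := by
    intro T hj
    have e : insert j (T.erase j) = T := Finset.insert_erase hj
    have key : ∀ T', T' = insert j (T.erase j) → ∀ h : T.erase j ⊆ T',
        cechMap A x M (T.erase j) T' h (u (T.erase j) (Finset.notMem_erase _ _))
          = x j ^ k • ev x T' z := by
      rintro _ rfl h
      exact hu2 _ _
    simp only [y]
    rw [map_sub, map_smul, hD1 b hb0 T hj, hb1 _ (Finset.notMem_erase j T), map_smul, smul_smul,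
      hsgE, sg_sq, one_smul, key T e.symm, sub_self]
  obtain ⟨l, hl⟩ : ∃ l : ℕ, ∀ T : Finset (Fin n),
      GP x w ℳ P (l * w j + (k * w j + μ)) T (x j ^ l • ev x T y) := by
    apply exists_uniform
    intro T
    by_cases hj : j ∈ T
    · refine ⟨0, fun l _ => ?_⟩
      rw [hy0 T hj, smul_zero]; exact GP.zero _ _ _
    · have e : (insert j T).erase j = T := Finset.erase_insert hj
      have h1 := hDy (insert j T)
      rw [hD1 y hy0 _ (Finset.mem_insert_self _ _),
        res_eq x y e _ (Finset.subset_insert _ _)] at h1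
      have h2 := h1.sg_smul (insert j T) j
      rw [smul_smul, sg_sq, one_smul] at h2
      exact (hyC T).torsion hx hj rfl _ h2
  refine ⟨l + k, ?_⟩
  rw [mem_BQ]
  refine ⟨x j ^ l • y, ?_, x j ^ l • b, ?_, ?_⟩
  · intro T
    rw [map_smul]
    convert hl T using 1
    push_cast; ring
  · refine smul_mem hx hbC (mem_hom_smul hx j l) ?_
    push_cast; ring
  · rw [map_smul, ← smul_add, pow_add, mul_smul]
    simp [y]

end GradedCech

/-! ### The induction -/
section Induct
variable {A : Type} [CommRing A] {𝒜 : ℤ → AddSubgroup A} [GradedRing 𝒜]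
  {n : ℕ} {x : Fin n → A} {w : Fin n → ℤ} (hx : ∀ i, x i ∈ 𝒜 (w i))
  {M : Type} [AddCommGroup M] [Module A M]
  (ℳ : ℤ → AddSubgroup M) [DirectSum.Decomposition ℳ] [SetLike.GradedSMul 𝒜 ℳ]

/-- The finiteness statement for the subquotient `Q / P`. -/
def Good (Q P : Submodule A M) : Prop :=
  (∃ e : ℤ, ∀ μ > e, ZQ hx ℳ Q P μ ≤ BQ hx ℳ Q P μ) ∧
    ∀ μ, NSub (ZQ hx ℳ Q P μ) (BQ hx ℳ Q P μ)

variable (x M) in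
/-- Inclusion of `M` as cochains supported at the empty set. -/
noncomputable def inc : M →ₗ[A] Tot x M where
  toFun m := ofFun x fun S => if S = ∅ then frac x S m 0 else 0
  map_add' m m' := by
    apply tot_ext
    intro S
    rw [map_add]
    simp only [ev_ofFun]
    split_ifs
    · rw [frac_add_same]
    · simp
  map_smul' a m := by
    apply tot_ext
    intro S
    rw [map_smul]
    simp only [ev_ofFun, RingHom.id_apply]
    split_ifs
    · rw [frac_smul]
    · simp

variable {ℳ}

include hx in
lemma GP.shrink {P Q : Submodule A M} (hall : ∀ i, ∀ m ∈ Q, x i • m ∈ P) {μ : ℤ}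
    {T : Finset (Fin n)} (hT : T.Nonempty) {c : cechL A x M T} (hc : GP x w ℳ Q μ T c) :
    GP x w ℳ P μ T c := by
  obtain ⟨m, k, hm, hm', rfl⟩ := hc
  refine ⟨(xp x T) ^ 1 • m, k + 1, ?_, smul_deg 𝒜 ℳ (xp_mem hx T 1) hm' ?_, (frac_up x T m k 1).symm⟩
  · obtain ⟨j, hj⟩ := hT
    have : xp x T = xp x (T.erase j) * x j := (Finset.prod_erase_mul T x hj).symm
    rw [pow_one, this, mul_smul]
    exact P.smul_mem _ (hall j m hm)
  · push_cast; ring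

lemma frac_empty (m : M) (k : ℕ) : frac x ∅ m k = frac x ∅ m 0 := by
  rw [frac_eq_iff]
  exact ⟨0, by simp [xp]⟩

lemma base [IsNoetherian A M]
    (hxgen : ∀ i > 0, ∀ a ∈ 𝒜 i, a ∈ Ideal.span (Set.range x))
    (P Q : Submodule A M) (hQ : Hom ℳ Q)
    (hall : ∀ i, ∀ m ∈ Q, x i • m ∈ P) : Good hx ℳ Q P := by
  have hpos : ∀ i > 0, ∀ a ∈ 𝒜 i, ∀ m ∈ Q, a • m ∈ P := by
    intro i hi a ha m hm
    have h1 := hxgen i hi a ha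
    have h2 : ∀ b ∈ Ideal.span (Set.range x), b • m ∈ P := by
      intro b hb
      induction hb using Submodule.span_induction with
      | mem y hy => obtain ⟨i, rfl⟩ := hy; exact hall i m hm
      | zero => simp
      | add y z _ _ h1 h2 => rw [add_smul]; exact P.add_mem h1 h2
      | smul b y _ h => rw [smul_eq_mul, mul_smul]; exact P.smul_mem _ h
    exact h2 a h1
  constructor
  · obtain ⟨e, he⟩ := large_deg 𝒜 ℳ P Q hQ hpos
    refine ⟨e, fun μ hμ z hz => ?_⟩
    rw [mem_BQ]
    refine ⟨z, fun T => ?_, 0, Submodule.zero_mem _, by simp⟩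
    rcases T.eq_empty_or_nonempty with rfl | hT
    · obtain ⟨m, k, hm, hm', h⟩ := hz.1 ∅
      refine ⟨m, k, he μ hμ m hm ?_, hm', h⟩
      simpa using hm'
    · exact (hz.1 T).shrink hx hall hT
  · intro μ
    have hN := Mdeg_noeth 𝒜 ℳ μ
    let f : M →ₗ[R0 𝒜] (Tot x M ⧸ BQ hx ℳ Q P μ) :=
      (BQ hx ℳ Q P μ).mkQ ∘ₗ ((inc x M).restrictScalars (R0 𝒜))
    have h1 : IsNoetherian (R0 𝒜) ((Mdeg 𝒜 ℳ μ).map f) :=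
      isNoetherian_of_surjective _ (LinearMap.range_eq_top.2 (f.submoduleMap_surjective _))
    refine isNoetherian_of_le (t := (Mdeg 𝒜 ℳ μ).map f) ?_
    rintro _ ⟨z, hz, rfl⟩
    obtain ⟨m, k, hm, hm', h⟩ := hz.1 ∅
    refine ⟨m, show m ∈ ℳ μ by simpa using hm', ?_⟩
    have h2 : inc x M m - z ∈ BQ hx ℳ Q P μ := by
      rw [mem_BQ]
      refine ⟨inc x M m - z, fun T => ?_, 0, Submodule.zero_mem _, by simp⟩
      rw [map_sub]
      rcases T.eq_empty_or_nonempty with rfl | hT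
      · have e : ev x ∅ (inc x M m) = frac x ∅ m 0 := by
          simp [inc, ev_ofFun]
        rw [e, h, frac_empty m k, sub_self]
        exact GP.zero _ _ _
      · have e : ev x T (inc x M m) = 0 := by
          simp [inc, ev_ofFun, hT.ne_empty]
        rw [e, zero_sub]
        exact ((hz.1 T).shrink hx hall hT).neg
    exact (Submodule.Quotient.eq _).2 h2

/-- `P + x_j Q`. -/
def Qx (x : Fin n → A) (j : Fin n) (P Q : Submodule A M) : Submodule A M :=
  P ⊔ Q.map (LinearMap.lsmul A M (x j))

/-- `{q ∈ Q | x_j q ∈ P}`. -/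
def Kx (x : Fin n → A) (j : Fin n) (P Q : Submodule A M) : Submodule A M :=
  Q ⊓ P.comap (LinearMap.lsmul A M (x j))

lemma mem_Qx {j : Fin n} {P Q : Submodule A M} {m : M} :
    m ∈ Qx x j P Q ↔ ∃ p ∈ P, ∃ q ∈ Q, p + x j • q = m := by
  unfold Qx
  rw [Submodule.mem_sup]
  constructor
  · rintro ⟨p, hp, _, ⟨b, hb, rfl⟩, h⟩
    exact ⟨p, hp, b, hb, h⟩
  · rintro ⟨p, hp, b, hb, h⟩
    exact ⟨p, hp, _, ⟨b, hb, rfl⟩, h⟩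

lemma mem_Kx {j : Fin n} {P Q : Submodule A M} {m : M} :
    m ∈ Kx x j P Q ↔ m ∈ Q ∧ x j • m ∈ P := Iff.rfl

include hx in
lemma Hom.Qx {j : Fin n} {P Q : Submodule A M} (hP : Hom ℳ P) (hQ : Hom ℳ Q) :
    Hom ℳ (Qx x j P Q) := by
  intro μ m hm
  rw [mem_Qx] at *
  obtain ⟨p, hp, q, hq, rfl⟩ := hm
  refine ⟨_, hP μ p hp, _, hQ (μ - w j) q hq, ?_⟩
  rw [map_add, pr_smul 𝒜 ℳ (hx j) μ (μ - w j) (by omega)]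

include hx in
lemma Hom.Kx {j : Fin n} {P Q : Submodule A M} (hP : Hom ℳ P) (hQ : Hom ℳ Q) :
    Hom ℳ (Kx x j P Q) := by
  intro μ m hm
  rw [mem_Kx] at *
  refine ⟨hQ μ m hm.1, ?_⟩
  rw [← pr_smul 𝒜 ℳ (hx j) (w j + μ) μ rfl]
  exact hP _ _ hm.2

include hx in
lemma GP.splitQ {j : Fin n} {P Q : Submodule A M} (hP : Hom ℳ P) (hQ : Hom ℳ Q) {μ : ℤ}
    {T : Finset (Fin n)} {c : cechL A x M T} (hc : GP x w ℳ (CechFin.Qx x j P Q) (w j + μ) T c) :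
    ∃ f, GP x w ℳ Q μ T f ∧ GP x w ℳ P (w j + μ) T (c - x j • f) := by
  obtain ⟨m, k, hm, hm', rfl⟩ := hc
  rw [mem_Qx] at hm
  obtain ⟨p, hp, q, hq, rfl⟩ := hm
  refine ⟨frac x T (pr ℳ (μ + k * wt w T) q) k, ⟨_, k, hQ _ _ hq, pr_mem ℳ _ _, rfl⟩,
    pr ℳ (w j + μ + k * wt w T) p, k, hP _ _ hp, pr_mem ℳ _ _, ?_⟩
  rw [sub_eq_iff_eq_add, frac_smul, frac_add_same,
    ← pr_smul 𝒜 ℳ (hx j) (w j + μ + k * wt w T) _ (by ring), ← map_add, pr_same ℳ hm']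

include hx in
lemma GP.toK {j : Fin n} {P Q : Submodule A M} {μ μ' : ℤ}
    {T : Finset (Fin n)} {c : cechL A x M T} (hc : GP x w ℳ Q μ T c)
    (hc' : GP x w ℳ P μ' T (x j • c)) : GP x w ℳ (CechFin.Kx x j P Q) μ T c := by
  obtain ⟨m, k, hm, hm', rfl⟩ := hc
  obtain ⟨p, r, hp, hp', hr⟩ := hc'
  rw [frac_smul, frac_eq_iff] at hr
  obtain ⟨c, hc⟩ := hr
  refine ⟨(xp x T) ^ (c + r) • m, k + (c + r), mem_Kx.2 ⟨Q.smul_mem _ hm, ?_⟩,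
    smul_deg 𝒜 ℳ (xp_mem hx T (c + r)) hm' ?_, (frac_up x T m k (c + r)).symm⟩
  · have : x j • (xp x T) ^ (c + r) • m = (xp x T) ^ c • (xp x T) ^ k • p := by
      rw [← hc]
      simp only [smul_smul]
      congr 1
      ring
    rw [this]
    exact P.smul_mem _ (P.smul_mem _ hp)
  · push_cast; ring

lemma CQ_splitQ {j : Fin n} {P Q : Submodule A M} (hP : Hom ℳ P) (hQ : Hom ℳ Q) {μ : ℤ}
    {c : Tot x M} (hc : c ∈ CQ hx ℳ (Qx x j P Q) (w j + μ)) :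
    ∃ f ∈ CQ hx ℳ Q μ, c - x j • f ∈ CQ hx ℳ P (w j + μ) := by
  choose f hf1 hf2 using fun T => (hc T).splitQ hx hP hQ
  refine ⟨ofFun x f, fun T => hf1 T, fun T => ?_⟩
  rw [map_sub, map_smul]
  exact hf2 T

lemma CQ_toK {j : Fin n} {P Q : Submodule A M} {μ μ' : ℤ} {c : Tot x M}
    (hc : c ∈ CQ hx ℳ Q μ) (hc' : x j • c ∈ CQ hx ℳ P μ') : c ∈ CQ hx ℳ (Kx x j P Q) μ := by
  intro T
  have := hc' T
  rw [map_smul] at this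
  exact (hc T).toK hx this

lemma Qx_le {j : Fin n} {P Q : Submodule A M} (hPQ : P ≤ Q) : Qx x j P Q ≤ Q := by
  intro m hm
  obtain ⟨p, hp, q, hq, rfl⟩ := mem_Qx.1 hm
  exact Q.add_mem (hPQ hp) (Q.smul_mem _ hq)

lemma le_Qx {j : Fin n} {P Q : Submodule A M} : P ≤ Qx x j P Q := le_sup_left

lemma Kx_le {j : Fin n} {P Q : Submodule A M} : Kx x j P Q ≤ Q := inf_le_left

lemma le_Kx {j : Fin n} {P Q : Submodule A M} (hPQ : P ≤ Q) : P ≤ Kx x j P Q :=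
  fun _ hm => mem_Kx.2 ⟨hPQ hm, P.smul_mem _ hm⟩

lemma smul_CQ_Qx {j : Fin n} {P Q : Submodule A M} {μ : ℤ} {c : Tot x M}
    (hc : c ∈ CQ hx ℳ Q μ) : x j • c ∈ CQ hx ℳ (Qx x j P Q) (w j + μ) := by
  intro T
  obtain ⟨m, k, hm, hm', h⟩ := hc T
  refine ⟨x j • m, k, mem_Qx.2 ⟨0, P.zero_mem, m, hm, by simp⟩, smul_deg 𝒜 ℳ (hx j) hm' (by ring), ?_⟩
  rw [map_smul, h, frac_smul]

/-- `D` over the degree zero ring. -/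
noncomputable def D0 : Tot x M →ₗ[R0 𝒜] Tot x M := (D x M).restrictScalars (R0 𝒜)

/-- Multiplication by `x j` over the degree zero ring. -/
noncomputable def X0 (j : Fin n) : Tot x M →ₗ[R0 𝒜] Tot x M :=
  (LinearMap.lsmul A (Tot x M) (x j)).restrictScalars (R0 𝒜)

section steps
variable {j : Fin n} {P Q : Submodule A M} {μ : ℤ}

lemma step1_B : ∀ b ∈ BQ hx ℳ Q (Qx x j P Q) μ, D x M b ∈ BQ hx ℳ (Qx x j P Q) P μ := by
  intro b hb
  obtain ⟨q', hq', q, hq, rfl⟩ := (mem_BQ hx).1 hb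
  rw [map_add, D_D, add_zero]
  exact (mem_BQ hx).2 ⟨0, Submodule.zero_mem _, q', hq', by simp⟩

lemma step1_ex : ∀ z ∈ ZQ hx ℳ (Qx x j P Q) P μ, z ∈ BQ hx ℳ Q P μ →
    ∃ u ∈ ZQ hx ℳ Q (Qx x j P Q) μ, z - D x M u ∈ BQ hx ℳ (Qx x j P Q) P μ := by
  intro z hz hB
  obtain ⟨p, hp, b, hb, rfl⟩ := (mem_BQ hx).1 hB
  refine ⟨b, ⟨hb, ?_⟩, ?_⟩
  · have := Submodule.sub_mem _ hz.1 (CQ_mono hx (le_Qx (x := x) (j := j) (Q := Q)) μ hp)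
    rw [add_sub_cancel_left] at this
    exact this
  · rw [add_sub_cancel_right]
    exact (mem_BQ hx).2 ⟨p, hp, 0, Submodule.zero_mem _, by simp⟩

lemma BQ_mono {Q1 Q2 P1 P2 : Submodule A M} (hQ : Q1 ≤ Q2) (hP : P1 ≤ P2) :
    BQ hx ℳ Q1 P1 μ ≤ BQ hx ℳ Q2 P2 μ :=
  sup_le_sup (CQ_mono hx hP μ) (Submodule.map_mono (CQ_mono hx hQ μ))

lemma ZQ_mono {Q1 Q2 P1 P2 : Submodule A M} (hQ : Q1 ≤ Q2) (hP : P1 ≤ P2) :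
    ZQ hx ℳ Q1 P1 μ ≤ ZQ hx ℳ Q2 P2 μ :=
  inf_le_inf (CQ_mono hx hQ μ) (Submodule.comap_mono (CQ_mono hx hP μ))

lemma step2_B : ∀ b ∈ BQ hx ℳ Q P μ, x j • b ∈ BQ hx ℳ (Qx x j P Q) P (w j + μ) := by
  intro b hb
  obtain ⟨p, hp, q, hq, rfl⟩ := (mem_BQ hx).1 hb
  refine (mem_BQ hx).2 ⟨x j • p, smul_mem hx hp (hx j) rfl, x j • q, smul_CQ_Qx hx hq, ?_⟩
  rw [smul_add, map_smul]

lemma step2_Z : ∀ z ∈ ZQ hx ℳ Q P μ, x j • z ∈ ZQ hx ℳ (Qx x j P Q) P (w j + μ) := by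
  intro z hz
  refine (mem_ZQ hx).2 ⟨smul_CQ_Qx hx hz.1, ?_⟩
  rw [map_smul]
  exact smul_mem hx hz.2 (hx j) rfl

lemma step2_ex (hP : Hom ℳ P) (hQ : Hom ℳ Q) :
    ∀ z ∈ ZQ hx ℳ Q P μ, x j • z ∈ BQ hx ℳ (Qx x j P Q) P (w j + μ) →
    ∃ u ∈ ZQ hx ℳ (Kx x j P Q) P μ, z - u ∈ BQ hx ℳ Q P μ := by
  intro z hz hB
  obtain ⟨p, hp, b, hb, he⟩ := (mem_BQ hx).1 hB
  obtain ⟨f, hf, hbf⟩ := CQ_splitQ hx hP hQ hb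
  refine ⟨z - D x M f, (mem_ZQ hx).2 ⟨?_, ?_⟩, ?_⟩
  · apply CQ_toK hx (μ' := w j + μ)
    · exact Submodule.sub_mem _ hz.1 (D_mem hx hf)
    · have e : x j • (z - D x M f) = p + D x M (b - x j • f) := by
        rw [smul_sub, ← he, map_sub, map_smul]; abel
      rw [e]
      exact Submodule.add_mem _ hp (D_mem hx hbf)
  · rw [map_sub, D_D, sub_zero]
    exact hz.2
  · rw [sub_sub_cancel]
    exact (mem_BQ hx).2 ⟨0, Submodule.zero_mem _, f, hf, by simp⟩

end steps

lemma step (hw : ∀ i, 0 < w i) {j : Fin n} {P Q : Submodule A M} (hPQ : P ≤ Q)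
    (hP : Hom ℳ P) (hQ : Hom ℳ Q)
    (hK : Good hx ℳ (Kx x j P Q) P) (hC : Good hx ℳ Q (Qx x j P Q)) : Good hx ℳ Q P := by
  obtain ⟨⟨e1, he1⟩, hK⟩ := hK
  obtain ⟨⟨e2, he2⟩, hC⟩ := hC
  have hwj := hw j
  have hinj : ∀ μ > max e1 e2, ∀ z ∈ ZQ hx ℳ Q P μ, x j • z ∈ BQ hx ℳ Q P (w j + μ) →
      z ∈ BQ hx ℳ Q P μ := by
    intro μ hμ z hz hB
    have hμ1 : μ > e1 := lt_of_le_of_lt (le_max_left _ _) hμ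
    have hμ2 : w j + μ > e2 := by
      have := lt_of_le_of_lt (le_max_right e1 e2) hμ
      omega
    have h1 : x j • z ∈ BQ hx ℳ (Qx x j P Q) P (w j + μ) :=
      van_ext (D0 (𝒜 := 𝒜)) LinearMap.id (he2 _ hμ2) (step1_B hx) (step1_ex hx) _
        (step2_Z hx z hz) hB
    exact van_ext LinearMap.id (X0 (𝒜 := 𝒜) j) (he1 _ hμ1)
      (BQ_mono hx Kx_le le_rfl) (step2_ex hx hP hQ) z hz h1
  have hvan : ∀ μ > max e1 e2, ZQ hx ℳ Q P μ ≤ BQ hx ℳ Q P μ := by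
    intro μ hμ z hz
    obtain ⟨l, hl⟩ := torsion hx j hz
    induction l with
    | zero => simpa using hl
    | succ l ih =>
      apply ih
      apply hinj
      · have : 0 ≤ (l : ℤ) * w j := by positivity
        omega
      · exact ZQ_smul hx hz (mem_hom_smul hx j l) rfl
      · rw [smul_smul, ← pow_succ']
        convert hl using 1
        push_cast; ring
  refine ⟨⟨max e1 e2, hvan⟩, ?_⟩
  have hstep : ∀ μ, NSub (ZQ hx ℳ Q P (w j + μ)) (BQ hx ℳ Q P (w j + μ)) →
      NSub (ZQ hx ℳ Q P μ) (BQ hx ℳ Q P μ) := by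
    intro μ h
    have h1 : NSub (ZQ hx ℳ (Qx x j P Q) P (w j + μ)) (BQ hx ℳ (Qx x j P Q) P (w j + μ)) :=
      NSub.ext (D0 (𝒜 := 𝒜)) LinearMap.id (hC (w j + μ)) h (step1_B hx)
        (BQ_mono hx (Qx_le hPQ) le_rfl) (ZQ_mono hx (Qx_le hPQ) le_rfl) (step1_ex hx)
    exact NSub.ext LinearMap.id (X0 (𝒜 := 𝒜) j) (hK μ) h1
      (BQ_mono hx Kx_le le_rfl) (step2_B hx) (step2_Z hx) (step2_ex hx hP hQ)
  have hall : ∀ (l : ℕ) (μ : ℤ), l * w j + μ > max e1 e2 →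
      NSub (ZQ hx ℳ Q P μ) (BQ hx ℳ Q P μ) := by
    intro l
    induction l with
    | zero => intro μ hμ; exact NSub.of_le (hvan μ (by simpa using hμ))
    | succ l ih =>
      intro μ hμ
      apply hstep
      apply ih
      push_cast at hμ
      linarith
  intro μ
  refine hall (max e1 e2 - μ + 1).toNat μ ?_
  have h1 : (max e1 e2 - μ + 1) ≤ ((max e1 e2 - μ + 1).toNat : ℤ) := Int.self_le_toNat _
  have h2 : (0 : ℤ) ≤ ((max e1 e2 - μ + 1).toNat : ℤ) := Int.natCast_nonneg _
  nlinarith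

lemma main [IsNoetherian A M] (hw : ∀ i, 0 < w i)
    (hxgen : ∀ i > 0, ∀ a ∈ 𝒜 i, a ∈ Ideal.span (Set.range x)) (J : Finset (Fin n)) :
    ∀ (P Q : Submodule A M), P ≤ Q → Hom ℳ P → Hom ℳ Q →
      (∀ i ∉ J, ∀ m ∈ Q, x i • m ∈ P) → Good hx ℳ Q P := by
  classical
  induction J using Finset.induction_on with
  | empty =>
    intro P Q _ _ hQ h
    exact base hx hxgen P Q hQ fun i => h i (by simp)
  | insert j J hj ih =>
    intro P Q hPQ hP hQ h
    refine step hx hw hPQ hP hQ (j := j) (ih _ _ (le_Kx hPQ) hP (Hom.Kx hx hP hQ) ?_)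
      (ih _ _ (Qx_le hPQ) (Hom.Qx hx hP hQ) hQ ?_)
    · intro i hi m hm
      by_cases hij : i = j
      · subst hij; exact hm.2
      · exact h i (by simp [hij, hi]) m hm.1
    · intro i hi m hm
      by_cases hij : i = j
      · subst hij; exact mem_Qx.2 ⟨0, P.zero_mem, m, hm, by simp⟩
      · exact le_Qx (h i (by simp [hij, hi]) m hm)

end Induct

/-! ### Transfer to the frozen Čech complex -/
section Transfer
variable {A : Type} [CommRing A] {𝒜 : ℤ → AddSubgroup A} [GradedRing 𝒜]
  {n : ℕ} {x : Fin n → A} {w : Fin n → ℤ} (hx : ∀ i, x i ∈ 𝒜 (w i))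
  {M : Type} [AddCommGroup M] [Module A M]
  {ℳ : ℤ → AddSubgroup M} [DirectSum.Decomposition ℳ] [SetLike.GradedSMul 𝒜 ℳ]

include hx in
lemma mem_cechGrade {μ : ℤ} {T : Finset (Fin n)} {c : cechL A x M T} :
    c ∈ cechGrade A x M ℳ w μ T ↔ GP x w ℳ ⊤ μ T c := by
  constructor
  · intro h
    unfold cechGrade at h
    induction h using AddSubgroup.closure_induction with
    | mem c hc =>
      obtain ⟨m, k, hm, rfl⟩ := hc
      exact ⟨m, k, trivial, hm, rfl⟩
    | zero => exact GP.zero _ _ _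
    | add a b _ _ ha hb => exact ha.add hx hb
    | neg a _ ha => exact ha.neg
  · rintro ⟨m, k, -, hm, rfl⟩
    exact AddSubgroup.subset_closure ⟨m, k, hm, rfl⟩

lemma CQ_bot {μ : ℤ} {c : Tot x M} (hc : c ∈ CQ hx ℳ ⊥ μ) : c = 0 := by
  apply tot_ext
  intro T
  obtain ⟨m, k, hm, -, h⟩ := hc T
  rw [h, (Submodule.mem_bot A).1 hm, frac_zero, map_zero]

variable (x M) in
/-- Extension by zero of a `p`-cochain. -/
noncomputable def ex (p : ℕ) : cechC A x M p →ₗ[A] Tot x M where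
  toFun z := ofFun x fun S => if h : S.card = p then z ⟨S, h⟩ else 0
  map_add' z z' := by
    apply tot_ext
    intro S
    rw [map_add]
    simp only [ev_ofFun]
    split_ifs
    · rfl
    · simp
  map_smul' a z := by
    apply tot_ext
    intro S
    rw [map_smul]
    simp only [ev_ofFun, RingHom.id_apply]
    split_ifs
    · rfl
    · simp

variable (x M) in
/-- Restriction of a total cochain to a `p`-cochain. -/
def rs (p : ℕ) : Tot x M →ₗ[A] cechC A x M p where
  toFun c := fun S => ev x S.1 c
  map_add' _ _ := rfl
  map_smul' _ _ := rfl

lemma ev_ex {p : ℕ} (z : cechC A x M p) (S : Finset (Fin n)) (h : S.card = p) :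
    ev x S (ex x M p z) = z ⟨S, h⟩ := dif_pos h

lemma ev_ex_ne {p : ℕ} (z : cechC A x M p) (S : Finset (Fin n)) (h : S.card ≠ p) :
    ev x S (ex x M p z) = 0 := dif_neg h

lemma rs_ex {p : ℕ} (z : cechC A x M p) : rs x M p (ex x M p z) = z := by
  funext S
  exact ev_ex z S.1 S.2

lemma cechD_rs {p : ℕ} (c : Tot x M) : cechD A x M p (rs x M p c) = rs x M (p + 1) (D x M c) := by
  funext T
  change _ = ev x T.1 (D x M c)
  rw [D_apply, ← Finset.sum_attach]
  unfold cechD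
  rw [LinearMap.pi_apply, LinearMap.sum_apply]
  rfl

lemma D_ex {p : ℕ} (z : cechC A x M p) (hz : cechD A x M p z = 0) : D x M (ex x M p z) = 0 := by
  apply tot_ext
  intro T
  rw [map_zero]
  by_cases hT : T.card = p + 1
  · have h := cechD_rs (p := p) (ex x M p z)
    rw [rs_ex, hz] at h
    exact (congrFun h ⟨T, hT⟩).symm
  · rw [D_apply]
    refine Finset.sum_eq_zero fun j hj => ?_
    rw [ev_ex_ne, map_zero, smul_zero]
    intro h
    have := Finset.card_erase_add_one hj
    omega

lemma ex_mem_CQ {p : ℕ} {μ : ℤ} {z : cechC A x M p}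
    (hz : ∀ T, z T ∈ cechGrade A x M ℳ w μ T.1) : ex x M p z ∈ CQ hx ℳ ⊤ μ := by
  intro T
  by_cases h : T.card = p
  · rw [ev_ex z T h]
    exact (mem_cechGrade hx).1 (hz ⟨T, h⟩)
  · rw [ev_ex_ne z T h]
    exact GP.zero _ _ _

lemma ex_mem_ZQ {p : ℕ} {μ : ℤ} {z : cechC A x M p}
    (hz : ∀ T, z T ∈ cechGrade A x M ℳ w μ T.1) (hd : cechD A x M p z = 0) :
    ex x M p z ∈ ZQ hx ℳ ⊤ ⊥ μ := by
  rw [mem_ZQ]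
  refine ⟨ex_mem_CQ hx hz, ?_⟩
  rw [D_ex z hd]
  exact Submodule.zero_mem _

lemma boundary_of_mem {p : ℕ} {μ : ℤ} {z : cechC A x M p}
    (h : ex x M p z ∈ BQ hx ℳ ⊤ ⊥ μ) : cechIsBoundary A x M p z := by
  obtain ⟨q, hq, b, -, hb⟩ := (mem_BQ hx).1 h
  rw [CQ_bot hx hq, zero_add] at hb
  cases p with
  | zero =>
    change z = 0
    funext S
    obtain ⟨S, hS⟩ := S
    rw [← ev_ex z S hS, ← hb, D_apply]
    have : S = ∅ := Finset.card_eq_zero.1 hS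
    subst this
    rfl
  | succ q =>
    refine ⟨rs x M q b, ?_⟩
    rw [cechD_rs, hb, rs_ex]

lemma rs_cocycle {p : ℕ} {μ : ℤ} {c : Tot x M} (hc : c ∈ ZQ hx ℳ ⊤ ⊥ μ) :
    (∀ T, rs x M p c T ∈ cechGrade A x M ℳ w μ T.1) ∧ cechD A x M p (rs x M p c) = 0 := by
  obtain ⟨h1, h2⟩ := (mem_ZQ hx).1 hc
  refine ⟨fun T => (mem_cechGrade hx).2 (h1 T.1), ?_⟩
  rw [cechD_rs, CQ_bot hx h2, map_zero]

variable (p : ℕ) (μ : ℤ) (ℳ) in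
/-- Homogeneous cocycles concentrated in cohomological degree `p`. -/
noncomputable def Zp : Submodule (R0 𝒜) (Tot x M) :=
  ZQ hx ℳ ⊤ ⊥ μ ⊓ LinearMap.ker ((LinearMap.id - (ex x M p).comp (rs x M p)).restrictScalars (R0 𝒜))

lemma mem_Zp {p : ℕ} {μ : ℤ} {c : Tot x M} :
    c ∈ Zp hx ℳ p μ ↔ c ∈ ZQ hx ℳ ⊤ ⊥ μ ∧ c - ex x M p (rs x M p c) = 0 := Iff.rfl

lemma pieces_fg (p : ℕ) (μ : ℤ) (hN : NSub (ZQ hx ℳ ⊤ ⊥ μ) (BQ hx ℳ ⊤ ⊥ μ)) :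
    ∃ (r : ℕ) (c : Fin r → cechC A x M p),
      (∀ j, (∀ T, c j T ∈ cechGrade A x M ℳ w μ T.1) ∧ cechD A x M p (c j) = 0) ∧
      ∀ z : cechC A x M p, (∀ T, z T ∈ cechGrade A x M ℳ w μ T.1) →
        cechD A x M p z = 0 →
        ∃ a : Fin r → A, (∀ j, a j ∈ 𝒜 0) ∧
          cechIsBoundary A x M p (z - ∑ j, a j • c j) := by
  have hle : (Zp hx ℳ p μ).map (BQ hx ℳ ⊤ ⊥ μ).mkQ ≤ (ZQ hx ℳ ⊤ ⊥ μ).map (BQ hx ℳ ⊤ ⊥ μ).mkQ :=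
    Submodule.map_mono inf_le_left
  have hfg : ((Zp hx ℳ p μ).map (BQ hx ℳ ⊤ ⊥ μ).mkQ).FG :=
    (isNoetherian_submodule (N := (ZQ hx ℳ ⊤ ⊥ μ).map (BQ hx ℳ ⊤ ⊥ μ).mkQ)).1 hN _ hle
  obtain ⟨r, s, hs⟩ := Submodule.fg_iff_exists_fin_generating_family.1 hfg
  have hs' : ∀ j, ∃ c ∈ Zp hx ℳ p μ, (BQ hx ℳ ⊤ ⊥ μ).mkQ c = s j := by
    intro j
    have : s j ∈ (Zp hx ℳ p μ).map (BQ hx ℳ ⊤ ⊥ μ).mkQ := by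
      rw [← hs]; exact Submodule.subset_span ⟨j, rfl⟩
    exact this
  choose c hc hcs using hs'
  refine ⟨r, fun j => rs x M p (c j), fun j => rs_cocycle hx ((mem_Zp hx).1 (hc j)).1, ?_⟩
  intro z hz hd
  have hzZ : ex x M p z ∈ Zp hx ℳ p μ :=
    (mem_Zp hx).2 ⟨ex_mem_ZQ hx hz hd, by rw [rs_ex, sub_self]⟩
  have hzs : (BQ hx ℳ ⊤ ⊥ μ).mkQ (ex x M p z) ∈ Submodule.span (R0 𝒜) (Set.range s) := by
    rw [hs]; exact ⟨_, hzZ, rfl⟩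
  obtain ⟨a, ha⟩ := (Submodule.mem_span_range_iff_exists_fun (R0 𝒜)).1 hzs
  refine ⟨fun j => (a j : A), fun j => (a j).2, boundary_of_mem hx (ℳ := ℳ) (μ := μ) ?_⟩
  have e : ex x M p (z - ∑ j, (a j : A) • rs x M p (c j)) = ex x M p z - ∑ j, a j • c j := by
    rw [map_sub, map_sum]
    congr 1
    refine Finset.sum_congr rfl fun j _ => ?_
    rw [map_smul, ← sub_eq_zero.1 ((mem_Zp hx).1 (hc j)).2]
    rfl
  rw [e, ← Submodule.Quotient.mk_eq_zero, ← Submodule.mkQ_apply, map_sub, ← ha, map_sum,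
    sub_eq_zero]
  refine Finset.sum_congr rfl fun j _ => ?_
  rw [map_smul, hcs]

end Transfer

end CechFin

open Filter in
/-- Let `S` be a Noetherian `ℤ`-graded ring (graded by `𝒜`; since `S` is Noetherian,
its irrelevant ideal `S₊`, generated by the homogeneous elements of positive degree,
is generated by finitely many homogeneous elements `x i` of positive degrees `w i`),
and let `M` be a finitely generated graded `S`-module.  Then for every `i`:
(i) `end (H^i_{S₊}(M)) ∈ ℤ ∪ {-∞}`, i.e. `H^i_{S₊}(M)` vanishes in all sufficiently
large degrees, and
(ii) for every `μ ∈ ℤ` the graded piece `H^i_{S₊}(M)_μ` is a finitely generated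
`S₀`-module: there are finitely many homogeneous degree-`μ` cocycles `c j` such that
every homogeneous degree-`μ` cocycle agrees, modulo coboundaries, with an
`S₀`-linear combination of the `c j`.
(Local cohomology is expressed through the graded Čech complex on `x`.) -/
theorem zgraded_localCohomology_end_finite_and_pieces_fg
    (A : Type) [CommRing A] [IsNoetherianRing A]
    (𝒜 : ℤ → AddSubgroup A) [GradedRing 𝒜]
    {n : ℕ} (x : Fin n → A) (w : Fin n → ℤ)
    (hw : ∀ i, 0 < w i) (hx : ∀ i, x i ∈ 𝒜 (w i))
    (hxgen : Ideal.span (Set.range x) = Ideal.span {a : A | ∃ μ > 0, a ∈ 𝒜 μ})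
    (M : Type) [AddCommGroup M] [Module A M] [Module.Finite A M]
    (ℳ : ℤ → AddSubgroup M) [DirectSum.Decomposition ℳ] [SetLike.GradedSMul 𝒜 ℳ] :
    (∀ i : ℕ, ∃ e : ℤ, ∀ μ : ℤ, e < μ → ¬ lcGradeNonzero A x M ℳ w i μ) ∧
    (∀ (i : ℕ) (μ : ℤ), ∃ (r : ℕ) (c : Fin r → cechC A x M i),
      (∀ j, (∀ T, c j T ∈ cechGrade A x M ℳ w μ T.1) ∧ cechD A x M i (c j) = 0) ∧
      ∀ z : cechC A x M i, (∀ T, z T ∈ cechGrade A x M ℳ w μ T.1) →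
        cechD A x M i z = 0 →
        ∃ a : Fin r → A, (∀ j, a j ∈ 𝒜 0) ∧
          cechIsBoundary A x M i (z - ∑ j, a j • c j)) := by
  haveI : IsNoetherian A M := isNoetherian_of_isNoetherianRing_of_finite A M
  have hgen : ∀ i > 0, ∀ a ∈ 𝒜 i, a ∈ Ideal.span (Set.range x) := by
    intro i hi a ha
    rw [hxgen]
    exact Ideal.subset_span ⟨i, hi, ha⟩
  have G : CechFin.Good hx ℳ (⊤ : Submodule A M) ⊥ := by
    refine CechFin.main hx hw hgen Finset.univ ⊥ ⊤ bot_le ?_ ?_ ?_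
    · intro μ m hm
      rw [(Submodule.mem_bot A).1 hm, map_zero]
      exact Submodule.zero_mem _
    · intro μ m hm
      trivial
    · intro i hi
      exact absurd (Finset.mem_univ i) hi
  obtain ⟨⟨e, he⟩, hN⟩ := G
  refine ⟨fun i => ⟨e, fun μ hμ => ?_⟩, fun i μ => CechFin.pieces_fg hx i μ (hN μ)⟩
  rintro ⟨c, hc, hd, hb⟩
  exact hb (CechFin.boundary_of_mem hx (he μ hμ (CechFin.ex_mem_ZQ hx hc hd)))
end

section
/- Let R → S be a homomorphism of Noetherian rings, M a finitely generated S-module and N a finitely generated R-module. Then for every q the S-module Tor_q^R(M, N) is finitely generated over S, and Supp_S( Tor_q^R(M, N) ) ⊆ Supp_S( M ⊗_R N ). -/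
noncomputable section TorCore

variable (R : Type) [CommRing R] (S : Type) [CommRing S] [Algebra R S]
variable (M : Type) [AddCommGroup M] [Module R M] [Module S M] [IsScalarTower R S M]
variable (F : ℕ → Type) [∀ q, AddCommGroup (F q)] [∀ q, Module R (F q)]
variable (dF : ∀ q : ℕ, F (q + 1) →ₗ[R] F q)

/-- The differential `M ⊗ F_{q+1} → M ⊗ F_q` of the complex `M ⊗_R F_•`, as a map of
`S`-modules (through the `S`-module structure of `M`). -/
def torD (q : ℕ) : TensorProduct R M (F (q + 1)) →ₗ[S] TensorProduct R M (F q) :=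
  TensorProduct.AlgebraTensorModule.map (LinearMap.id : M →ₗ[S] M) (dF q)

/-- The outgoing differential `M ⊗ F_q → M ⊗ F_{q-1}` (the zero map for `q = 0`). -/
def torDout : (q : ℕ) → (TensorProduct R M (F q) →ₗ[S] TensorProduct R M (F (q - 1)))
  | 0 => 0
  | (q + 1) => torD R S M F dF q

/-- `Tor_q^R(M, N)` computed from a given free resolution `F_• → N` of `N`, as an
`S`-module: the homology `ker(M ⊗ F_q → M ⊗ F_{q-1}) / im(M ⊗ F_{q+1} → M ⊗ F_q)`. -/
def torMod (q : ℕ) : Type :=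
  ↥(LinearMap.ker (torDout R S M F dF q)) ⧸
    (Submodule.comap (LinearMap.ker (torDout R S M F dF q)).subtype
      (LinearMap.range (torD R S M F dF q)))

instance (q : ℕ) : AddCommGroup (torMod R S M F dF q) := by unfold torMod; infer_instance
instance (q : ℕ) : Module S (torMod R S M F dF q) := by unfold torMod; infer_instance

end TorCore

open TensorProduct in
theorem aux_finite (R S M N : Type) [CommRing R] [CommRing S] [Algebra R S]
    [AddCommGroup M] [Module R M] [Module S M] [IsScalarTower R S M] [Module.Finite S M]
    [AddCommGroup N] [Module R N] [Module.Finite R N] : Module.Finite S (M ⊗[R] N) :=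
  Module.Finite.equiv (AlgebraTensorModule.cancelBaseChange R S S M N)

open TensorProduct in
theorem aux_support {R S M N : Type} [CommRing R] [CommRing S] [Algebra R S]
    [AddCommGroup M] [Module R M] [Module S M] [IsScalarTower R S M] [Module.Finite S M]
    [AddCommGroup N] [Module R N] [Module.Finite R N] (p : PrimeSpectrum S)
    (hM : p ∈ Module.support S M)
    (hN : PrimeSpectrum.comap (algebraMap R S) p ∈ Module.support R N) :
    p ∈ Module.support S (M ⊗[R] N) := by
  have : Module.Finite S (M ⊗[R] N) := aux_finite R S M N
  rw [Module.mem_support_iff_nontrivial_residueField_tensorProduct] at hM hN ⊢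
  let r := PrimeSpectrum.comap (algebraMap R S) p
  let _ : Algebra r.asIdeal.ResidueField p.asIdeal.ResidueField :=
    (Ideal.ResidueField.map r.asIdeal p.asIdeal (algebraMap R S) rfl).toAlgebra
  have : IsScalarTower R r.asIdeal.ResidueField p.asIdeal.ResidueField := by
    refine IsScalarTower.of_algebraMap_eq fun x => ?_
    rw [RingHom.algebraMap_toAlgebra, IsScalarTower.algebraMap_apply R S]
    exact (Ideal.ResidueField.map_algebraMap r.asIdeal p.asIdeal (algebraMap R S) rfl x).symm
  have h1 : Nontrivial (p.asIdeal.ResidueField ⊗[R] N) :=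
    (AlgebraTensorModule.cancelBaseChange R r.asIdeal.ResidueField p.asIdeal.ResidueField
      p.asIdeal.ResidueField N).symm.toEquiv.nontrivial
  have h2 : Nontrivial ((p.asIdeal.ResidueField ⊗[S] M) ⊗[R] N) :=
    (AlgebraTensorModule.cancelBaseChange R p.asIdeal.ResidueField p.asIdeal.ResidueField
      (p.asIdeal.ResidueField ⊗[S] M) N).symm.toEquiv.nontrivial
  exact (AlgebraTensorModule.assoc R S S p.asIdeal.ResidueField M N).symm.toEquiv.nontrivial

theorem aux_lift {R P A B C : Type} [CommRing R] [AddCommGroup P] [Module R P]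
    [Module.Projective R P] [AddCommGroup A] [Module R A] [AddCommGroup B] [Module R B]
    [AddCommGroup C] [Module R C] (f : A →ₗ[R] B) (g : B →ₗ[R] C) (h : Function.Exact f g)
    (u : P →ₗ[R] B) (hu : ∀ x, g (u x) = 0) : ∃ v : P →ₗ[R] A, ∀ x, f (v x) = u x := by
  obtain ⟨v, hv⟩ := Module.projective_lifting_property f.rangeRestrict
    (u.codRestrict (LinearMap.range f) fun x => (h _).1 (hu x)) f.surjective_rangeRestrict
  exact ⟨v, fun x => congrArg Subtype.val (LinearMap.congr_fun hv x)⟩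

theorem aux_homotopy0 {R N : Type} [CommRing R] [AddCommGroup N] [Module R N]
    {F : ℕ → Type} [∀ q, AddCommGroup (F q)] [∀ q, Module R (F q)]
    [∀ q, Module.Free R (F q)]
    (dF : ∀ q : ℕ, F (q + 1) →ₗ[R] F q) (ε : F 0 →ₗ[R] N)
    (hexact0 : Function.Exact (dF 0) ε) (t : R) (ht : ∀ n : N, t • n = 0) :
    ∃ a : F 0 →ₗ[R] F 1, ∀ x, dF 0 (a x) = t • x :=
  aux_lift (dF 0) ε hexact0 (t • LinearMap.id) (by simp [ht])

theorem aux_homotopy {R N : Type} [CommRing R] [AddCommGroup N] [Module R N]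
    {F : ℕ → Type} [∀ q, AddCommGroup (F q)] [∀ q, Module R (F q)]
    [∀ q, Module.Free R (F q)]
    (dF : ∀ q : ℕ, F (q + 1) →ₗ[R] F q) (ε : F 0 →ₗ[R] N)
    (hexact : ∀ q : ℕ, Function.Exact (dF (q + 1)) (dF q))
    (hexact0 : Function.Exact (dF 0) ε) (t : R) (ht : ∀ n : N, t • n = 0) (q : ℕ) :
    ∃ (a : F q →ₗ[R] F (q + 1)) (b : F (q + 1) →ₗ[R] F (q + 2)),
      ∀ x, dF (q + 1) (b x) = t • x - a (dF q x) := by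
  induction q with
  | zero =>
    obtain ⟨a, ha⟩ := aux_homotopy0 dF ε hexact0 t ht
    obtain ⟨b, hb⟩ := aux_lift (dF 1) (dF 0) (hexact 0) (t • LinearMap.id - a ∘ₗ dF 0)
      (by simp [ha])
    exact ⟨a, b, fun x => by simpa using hb x⟩
  | succ q ih =>
    obtain ⟨a, b, hb⟩ := ih
    obtain ⟨c, hc⟩ := aux_lift (dF (q + 2)) (dF (q + 1)) (hexact (q + 1))
      (t • LinearMap.id - b ∘ₗ dF (q + 1))
      (by simp [hb, (hexact q).apply_apply_eq_zero])
    exact ⟨b, c, fun x => by simpa using hc x⟩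

open TensorProduct in
theorem aux_smul_mem_range {R S M N : Type} [CommRing R] [CommRing S] [Algebra R S]
    [AddCommGroup M] [Module R M] [Module S M] [IsScalarTower R S M]
    [AddCommGroup N] [Module R N]
    {F : ℕ → Type} [∀ q, AddCommGroup (F q)] [∀ q, Module R (F q)]
    [∀ q, Module.Free R (F q)]
    (dF : ∀ q : ℕ, F (q + 1) →ₗ[R] F q) (ε : F 0 →ₗ[R] N)
    (hexact : ∀ q : ℕ, Function.Exact (dF (q + 1)) (dF q))
    (hexact0 : Function.Exact (dF 0) ε) (t : R) (ht : ∀ n : N, t • n = 0) (q : ℕ)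
    (z : M ⊗[R] F q) (hz : torDout R S M F dF q z = 0) :
    algebraMap R S t • z ∈ LinearMap.range (torD R S M F dF q) := by
  rw [algebraMap_smul]
  cases q with
  | zero =>
    obtain ⟨a, ha⟩ := aux_homotopy0 dF ε hexact0 t ht
    refine ⟨a.lTensor M z, ?_⟩
    clear hz
    induction z with
    | zero => simp
    | add x y hx hy => rw [map_add, map_add, hx, hy, smul_add]
    | tmul m x => simp [torD, ha]
  | succ q =>
    obtain ⟨a, b, hb⟩ := aux_homotopy dF ε hexact hexact0 t ht q
    refine ⟨b.lTensor M z, ?_⟩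
    have key : torD R S M F dF (q + 1) (b.lTensor M z)
        = t • z - a.lTensor M (torD R S M F dF q z) := by
      clear hz
      induction z with
      | zero => simp
      | add x y hx hy => simp only [map_add, hx, hy, smul_add]; abel
      | tmul m x => simp [torD, hb, tmul_sub]
    have hz' : torD R S M F dF q z = 0 := hz
    rw [key, hz', map_zero, sub_zero]

/-- **Support of Tor.**  Let `R → S` be a homomorphism of Noetherian rings, `M` a finitely
generated `S`-module and `N` a finitely generated `R`-module.  `Tor_q^R(M, N)` is computed
from any resolution of `N` by finite free `R`-modules `F_•` (which exists since `R` is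
Noetherian and `N` finitely generated), carrying its natural `S`-module structure through
`M`.  Then `Tor_q^R(M, N)` is a finitely generated `S`-module, and
`Supp_S (Tor_q^R(M, N)) ⊆ Supp_S (M ⊗_R N)` for every `q`. -/
theorem torMod_finite_and_support_subset
    (R : Type) [CommRing R] [IsNoetherianRing R]
    (S : Type) [CommRing S] [IsNoetherianRing S] [Algebra R S]
    (M : Type) [AddCommGroup M] [Module R M] [Module S M] [IsScalarTower R S M]
    [Module.Finite S M]
    (N : Type) [AddCommGroup N] [Module R N] [Module.Finite R N]
    (F : ℕ → Type) [∀ q, AddCommGroup (F q)] [∀ q, Module R (F q)]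
    [∀ q, Module.Free R (F q)] [∀ q, Module.Finite R (F q)]
    (dF : ∀ q : ℕ, F (q + 1) →ₗ[R] F q) (ε : F 0 →ₗ[R] N)
    (hexact : ∀ q : ℕ, Function.Exact (dF (q + 1)) (dF q))
    (hexact0 : Function.Exact (dF 0) ε) (hsurj : Function.Surjective ε) :
    ∀ q : ℕ, Module.Finite S (torMod R S M F dF q) ∧
      Module.support S (torMod R S M F dF q) ⊆
        Module.support S (TensorProduct R M N) := by
  intro q
  have : IsNoetherian S (TensorProduct R M (F q)) :=
    have := aux_finite R S M (F q)
    isNoetherian_of_isNoetherianRing_of_finite S _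
  refine ⟨by unfold torMod; infer_instance, ?_⟩
  intro p hp
  apply aux_support p
  · by_contra h
    rw [Module.mem_support_iff_of_finite, SetLike.not_le_iff_exists] at h
    obtain ⟨s, hs, hsp⟩ := h
    rw [Module.mem_annihilator] at hs
    refine hsp (Module.annihilator_le_of_mem_support hp ?_)
    rw [Module.mem_annihilator]
    intro z
    obtain ⟨z, rfl⟩ := Submodule.Quotient.mk_surjective _ z
    refine (Submodule.Quotient.mk_smul _ s z).symm.trans ?_
    have : s • z = 0 := by
      apply Subtype.ext
      change s • (z : TensorProduct R M (F q)) = 0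
      induction (z : TensorProduct R M (F q)) with
      | zero => simp
      | add x y hx hy => rw [smul_add, hx, hy, add_zero]
      | tmul m x => rw [TensorProduct.smul_tmul', hs, TensorProduct.zero_tmul]
    rw [this]
    rfl
  · by_contra h
    rw [Module.mem_support_iff_of_finite, SetLike.not_le_iff_exists] at h
    obtain ⟨t, ht, htp⟩ := h
    rw [Module.mem_annihilator] at ht
    refine htp (Module.annihilator_le_of_mem_support hp (?_ : algebraMap R S t ∈ _))
    rw [Module.mem_annihilator]
    intro z
    obtain ⟨z, rfl⟩ := Submodule.Quotient.mk_surjective _ z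
    refine (Submodule.Quotient.mk_smul _ (algebraMap R S t) z).symm.trans ?_
    refine (Submodule.Quotient.mk_eq_zero _).2 ?_
    exact aux_smul_mem_range dF ε hexact hexact0 t ht q z.1 z.2
end
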